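/- arXiv:2402.03983 — 2 statements merged into one kernel-verified Lean document; each statement's English description precedes it below -/
import Mathlib

section
/- Fix an integer m ≥ 2 and M = {M_β}_{|β|≤m} ⊆ ℂ. For each δ > 0, there is a complex Borel measure μ_{1/δ} on ℝ^d (given by the density which is the inverse Fourier transform of φ_δ) whose Fourier transform equals φ_δ, which has finite absolute moments of order m, and which satisfies ∫ x^β dμ_{1/δ}(x) = M_β for every multi-index β with |β| ≤ m; in particular μ_{1/δ} ∈ 𝓜_m^M. -/
open MeasureTheory Filter Topology
open scoped ENNReal NNReal

noncomputable section
open scoped Classical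


abbrev Vd (d : ℕ) := EuclideanSpace ℝ (Fin d)

/-- The total variation measure `|μ|` of a complex measure (realized as the sum of the
total variations of its real and imaginary parts). -/
def ctv {d : ℕ} (μ : ComplexMeasure (Vd d)) : Measure (Vd d) :=
  μ.re.totalVariation + μ.im.totalVariation

/-- Integral of a complex-valued function against a complex measure. -/
def cint {d : ℕ} (μ : ComplexMeasure (Vd d)) (f : Vd d → ℂ) : ℂ :=
  ((∫ x, f x ∂μ.re.toJordanDecomposition.posPart) -
    (∫ x, f x ∂μ.re.toJordanDecomposition.negPart)) +
  Complex.I * ((∫ x, f x ∂μ.im.toJordanDecomposition.posPart) -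
    (∫ x, f x ∂μ.im.toJordanDecomposition.negPart))

/-- The Fourier transform `μ̂(ξ) = ∫ e^{-i x·ξ} dμ(x)` of a complex measure. -/
def ftc {d : ℕ} (μ : ComplexMeasure (Vd d)) (ξ : Vd d) : ℂ :=
  cint μ (fun x => Complex.exp (-(Complex.I) * ((∑ i, x i * ξ i : ℝ) : ℂ)))

/-- The Fourier-based distance `d_m(μ,ν) = sup_{ξ ≠ 0} |μ̂(ξ)-ν̂(ξ)|/|ξ|^m` (valued in `ℝ≥0∞`). -/
def dm {d : ℕ} (m : ℕ) (μ ν : ComplexMeasure (Vd d)) : ℝ≥0∞ :=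
  ⨆ ξ : {ξ : Vd d // ξ ≠ 0}, ENNReal.ofReal (‖ftc μ ξ - ftc ν ξ‖ / ‖(ξ : Vd d)‖ ^ m)

/-- The finite set of multi-indices `β ∈ ℕ^d` with `|β| ≤ m`. -/
def multiIdx (d m : ℕ) : Finset (Fin d → ℕ) :=
  (Fintype.piFinset fun _ : Fin d => Finset.range (m + 1)).filter fun γ => ∑ i, γ i ≤ m

/-- The set `𝓜_m^M` of complex measures with finite `m`-th absolute moment and
moments prescribed by `M`. -/
def MomentSet (d m : ℕ) (M : (Fin d → ℕ) → ℂ) : Set (ComplexMeasure (Vd d)) :=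
  {μ | (∫⁻ x, (‖x‖₊ : ℝ≥0∞) ^ m ∂(ctv μ)) < ⊤ ∧
       ∀ β : Fin d → ℕ, (∑ i, β i) ≤ m →
         cint μ (fun x => ∏ i, ((x i : ℂ)) ^ (β i)) = M β}

/-- The polynomial `P(ξ) = Σ_{|γ|≤m} (M_γ/γ!) (-iξ)^γ`. -/
def Ppoly (d m : ℕ) (M : (Fin d → ℕ) → ℂ) (ξ : Vd d) : ℂ :=
  ∑ γ ∈ multiIdx d m,
    (M γ / ∏ i, (Nat.factorial (γ i) : ℂ)) * ∏ i, (-(Complex.I) * (ξ i)) ^ (γ i)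

/-- The function `φ_δ`. -/
def phiFun (d m : ℕ) (M : (Fin d → ℕ) → ℂ) (δ : ℝ) (ξ : Vd d) : ℂ :=
  if ξ = 0 then Ppoly d m M 0
  else (Ppoly d m M ξ +
      ((‖ξ‖ ^ (m + 2) * Real.sin (1 / ‖ξ‖ ^ m) * Real.exp (-δ / ‖ξ‖ ^ 2) : ℝ) : ℂ)) *
    ((Real.exp (-‖ξ‖ ^ (2 * m)) : ℝ) : ℂ)

/-- The function `f_δ`. -/
def fdelta (d m : ℕ) (δ : ℝ) (ξ : Vd d) : ℝ :=
  if ξ = 0 then 0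
  else ‖ξ‖ ^ (m + 2) * Real.sin (1 / ‖ξ‖ ^ m) * Real.exp (-δ / ‖ξ‖ ^ 2)

/-- First-order partial derivative in the `i`-th coordinate direction. -/
def pderiv1 {d : ℕ} {F : Type*} [NormedAddCommGroup F] [NormedSpace ℝ F]
    (i : Fin d) (f : Vd d → F) : Vd d → F :=
  fun ξ => fderiv ℝ f ξ (EuclideanSpace.single i 1)

/-- The multi-index partial derivative `D^β = ∂_{ξ_1}^{β_1} ⋯ ∂_{ξ_d}^{β_d}`. -/
def Dmulti {d : ℕ} {F : Type*} [NormedAddCommGroup F] [NormedSpace ℝ F]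
    (β : Fin d → ℕ) (f : Vd d → F) : Vd d → F :=
  (List.ofFn fun i : Fin d => (pderiv1 i)^[β i]).foldr (fun op g => op g) f

/-- building block -/
def bblk (m : ℕ) (δ : ℝ) (a σ : ℝ) (s : ℝ) : ℝ :=
  if 0 < s then s ^ a * Real.sin (s ^ (-(m:ℝ)/2) + σ) * Real.exp (-δ / s - s ^ m) else 0

lemma exp_bd (m : ℕ) (hm : 1 ≤ m) (δ : ℝ) (hδ : 0 < δ) (c : ℝ) :
    ∃ C : ℝ, 0 ≤ C ∧ ∀ s : ℝ, 0 < s → s ^ c * Real.exp (-δ / s - s ^ m) ≤ C := by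
  obtain ⟨N, hN⟩ := exists_nat_ge |c|
  have hc := abs_le.1 hN
  refine ⟨(N.factorial : ℝ) * Real.exp 1 + N.factorial * (δ⁻¹) ^ N, by positivity, fun s hs => ?_⟩
  have h1 : s ^ c ≤ s ^ N + (s⁻¹) ^ N := by
    rcases le_total 1 s with h | h
    · have : s ^ c ≤ s ^ (N:ℝ) := Real.rpow_le_rpow_of_exponent_le h hc.2
      rw [Real.rpow_natCast] at this
      have : 0 ≤ (s⁻¹)^N := by positivity
      linarith
    · have : s ^ c ≤ s ^ (-(N:ℝ)) := Real.rpow_le_rpow_of_exponent_ge hs h hc.1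
      rw [Real.rpow_neg hs.le, Real.rpow_natCast, ← inv_pow] at this
      have : 0 ≤ s^N := by positivity
      linarith
  have h2 : s ^ N * Real.exp (-δ / s - s ^ m) ≤ N.factorial * Real.exp 1 := by
    have e1 : s ^ N / N.factorial ≤ Real.exp s := Real.pow_div_factorial_le_exp s hs.le N
    rw [div_le_iff₀ (by positivity)] at e1
    have e2 : s - 1 ≤ s ^ m := by
      rcases le_total 1 s with h | h
      · have := le_self_pow₀ h (show m ≠ 0 by omega)
        linarith
      · have : 0 ≤ s^m := by positivity
        linarith
    have e3 : Real.exp (-δ / s - s ^ m) ≤ Real.exp (1 - s) := by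
      apply Real.exp_le_exp.2
      have : 0 ≤ δ / s := by positivity
      rw [neg_div]; linarith
    calc _ ≤ (Real.exp s * N.factorial) * Real.exp (1 - s) := by gcongr
      _ = N.factorial * (Real.exp s * Real.exp (1 - s)) := by ring
      _ = _ := by rw [← Real.exp_add]; congr 2; ring
  have h3 : (s⁻¹) ^ N * Real.exp (-δ / s - s ^ m) ≤ N.factorial * (δ⁻¹) ^ N := by
    have e1 := Real.pow_div_factorial_le_exp (δ / s) (by positivity) N
    rw [div_le_iff₀ (by positivity)] at e1
    have e2 : (s⁻¹) ^ N = (δ / s) ^ N * (δ⁻¹) ^ N := by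
      rw [← mul_pow]; congr 1; field_simp
    have e3 : Real.exp (-δ / s - s ^ m) ≤ Real.exp (- (δ / s)) := by
      apply Real.exp_le_exp.2
      have : 0 ≤ s ^ m := by positivity
      rw [neg_div]; linarith
    rw [e2]
    calc _ ≤ ((Real.exp (δ / s) * N.factorial) * (δ⁻¹) ^ N) * Real.exp (- (δ / s)) := by gcongr
      _ = N.factorial * (δ⁻¹) ^ N * (Real.exp (δ/s) * Real.exp (- (δ/s))) := by ring
      _ = _ := by rw [← Real.exp_add]; simp
  calc _ ≤ (s ^ N + (s⁻¹) ^ N) * Real.exp (-δ / s - s ^ m) := by gcongr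
    _ ≤ _ := by rw [add_mul]; linarith

lemma bblk_bd (m : ℕ) (hm : 1 ≤ m) (δ : ℝ) (hδ : 0 < δ) (a σ : ℝ) (k : ℕ) :
    ∃ C : ℝ, ∀ s : ℝ, |s| ^ k * |bblk m δ a σ s| ≤ C := by
  obtain ⟨C, hC0, hC⟩ := exp_bd m hm δ hδ (a + k)
  refine ⟨C, fun s => ?_⟩
  unfold bblk
  split_ifs with hs
  · refine le_trans ?_ (hC s hs)
    rw [abs_mul, abs_mul, Real.abs_exp, abs_of_pos hs, abs_of_pos (Real.rpow_pos_of_pos hs a),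
      Real.rpow_add hs, Real.rpow_natCast]
    have := Real.abs_sin_le_one (s ^ (-(m:ℝ)/2) + σ)
    calc _ = s ^ a * s ^ k * Real.exp (-δ / s - s ^ m) * |Real.sin (s ^ (-(m:ℝ)/2) + σ)| := by ring
      _ ≤ s ^ a * s ^ k * Real.exp (-δ / s - s ^ m) * 1 := by gcongr
      _ = _ := by ring
  · simpa using hC0

lemma bblk_sq (m : ℕ) (hm : 1 ≤ m) (δ : ℝ) (hδ : 0 < δ) (a σ : ℝ) :
    ∃ C : ℝ, ∀ s : ℝ, |bblk m δ a σ s| ≤ C * s ^ 2 := by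
  obtain ⟨C, hC0, hC⟩ := exp_bd m hm δ hδ (a - 2)
  refine ⟨C, fun s => ?_⟩
  unfold bblk
  split_ifs with hs
  · have h := hC s hs
    rw [abs_mul, abs_mul, Real.abs_exp, abs_of_pos (Real.rpow_pos_of_pos hs a)]
    have e : s ^ a = s ^ (a - 2) * s ^ 2 := by
      rw [← Real.rpow_natCast, ← Real.rpow_add hs]; norm_num
    have := Real.abs_sin_le_one (s ^ (-(m:ℝ)/2) + σ)
    rw [e]
    calc _ = s ^ (a-2) * Real.exp (-δ / s - s ^ m) * s ^ 2 * |Real.sin (s ^ (-(m:ℝ)/2) + σ)| := by ring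
      _ ≤ C * s ^ 2 * 1 := by gcongr
      _ = _ := by ring
  · simp; positivity

lemma bblk_deriv (m : ℕ) (hm : 1 ≤ m) (δ : ℝ) (hδ : 0 < δ) (a σ : ℝ) (s : ℝ) :
    HasDerivAt (bblk m δ a σ) (a * bblk m δ (a-1) σ s +
      (-(m:ℝ)/2) * bblk m δ (a - m/2 - 1) (σ + Real.pi/2) s
      + δ * bblk m δ (a - 2) σ s + (-(m:ℝ)) * bblk m δ (a + m - 1) σ s) s := by
  rcases lt_trichotomy s 0 with hs | rfl | hs
  · have e : bblk m δ a σ =ᶠ[𝓝 s] fun _ => 0 := by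
      filter_upwards [eventually_lt_nhds hs] with x hx
      simp [bblk, hx.le]
    have : ∀ a σ, bblk m δ a σ s = 0 := fun a σ => by simp [bblk, hs.le]
    simp only [this]
    simpa using (hasDerivAt_const s (0:ℝ)).congr_of_eventuallyEq e
  · have : ∀ a σ, bblk m δ a σ 0 = 0 := fun a σ => by simp [bblk]
    simp only [this]
    obtain ⟨C, hC⟩ := bblk_sq m hm δ hδ a σ
    rw [hasDerivAt_iff_isLittleO]
    simp only [this, mul_zero, add_zero, smul_eq_mul, sub_zero]
    have h1 : bblk m δ a σ =O[𝓝 0] fun s : ℝ => s ^ 2 := by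
      apply Asymptotics.IsBigO.of_bound C
      filter_upwards with x
      simpa using hC x
    have h2 : (fun s : ℝ => s ^ 2) =o[𝓝 0] fun s : ℝ => s := by
      simpa using Asymptotics.isLittleO_pow_id (𝕜 := ℝ) (n := 2) (by norm_num)
    exact h1.trans_isLittleO h2
  · have e : bblk m δ a σ =ᶠ[𝓝 s] fun s => s ^ a * Real.sin (s ^ (-(m:ℝ)/2) + σ) * Real.exp (-δ / s - s ^ m) := by
      filter_upwards [eventually_gt_nhds hs] with x hx
      simp [bblk, hx]
    have d1 := Real.hasDerivAt_rpow_const (x := s) (p := a) (Or.inl hs.ne')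
    have d2 := ((Real.hasDerivAt_rpow_const (x := s) (p := -(m:ℝ)/2) (Or.inl hs.ne')).add_const σ).sin
    have d3 := ((((hasDerivAt_inv hs.ne').const_mul (-δ))).sub (hasDerivAt_pow m s)).exp
    have d := ((d1.mul d2).mul d3).congr_of_eventuallyEq (f₁ := bblk m δ a σ) (by
      filter_upwards [e] with x hx; rw [hx]; simp [div_eq_mul_inv])
    refine d.congr_deriv ?_
    simp only [bblk, hs, if_true, Real.sin_add_pi_div_two, ← add_assoc]
    have r1 : s ^ (a - m/2 - 1) = s ^ a * s ^ (-(m:ℝ)/2 - 1) := by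
      rw [← Real.rpow_add hs]; congr 1; ring
    have r2 : s ^ (a - 2) = s ^ a * (s^2)⁻¹ := by
      rw [Real.rpow_sub hs]; norm_cast
    have r3 : s ^ (a + m - 1) = s ^ a * s ^ (m - 1) := by
      rw [← Real.rpow_natCast s (m-1), ← Real.rpow_add hs, Nat.cast_sub hm]; congr 1; push_cast; ring
    rw [r1, r2, r3]
    simp only [Pi.mul_apply, Pi.sub_apply, div_eq_mul_inv]
    ring

inductive BCls (m : ℕ) (δ : ℝ) : (ℝ → ℝ) → Prop
  | base (a σ : ℝ) : BCls m δ (bblk m δ a σ)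
  | add (f g : ℝ → ℝ) : BCls m δ f → BCls m δ g → BCls m δ (fun s => f s + g s)
  | smul (c : ℝ) (f : ℝ → ℝ) : BCls m δ f → BCls m δ (fun s => c * f s)

lemma BCls.deriv {m : ℕ} (hm : 1 ≤ m) {δ : ℝ} (hδ : 0 < δ) {f : ℝ → ℝ} (h : BCls m δ f) :
    Differentiable ℝ f ∧ BCls m δ (_root_.deriv f) := by
  induction h with
  | base a σ =>
    refine ⟨fun s => (bblk_deriv m hm δ hδ a σ s).differentiableAt, ?_⟩
    have : _root_.deriv (bblk m δ a σ) = _ := funext fun s => (bblk_deriv m hm δ hδ a σ s).deriv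
    rw [this]
    exact .add _ _ (.add _ _ (.add _ _ (.smul _ _ (.base _ _)) (.smul _ _ (.base _ _)))
      (.smul _ _ (.base _ _))) (.smul _ _ (.base _ _))
  | add f g _ _ hf hg =>
    refine ⟨hf.1.add hg.1, ?_⟩
    have : _root_.deriv (fun s => f s + g s) = fun s => _root_.deriv f s + _root_.deriv g s :=
      funext fun s => deriv_fun_add (hf.1 s) (hg.1 s)
    rw [this]; exact .add _ _ hf.2 hg.2
  | smul c f _ hf =>
    refine ⟨hf.1.const_mul c, ?_⟩
    have : _root_.deriv (fun s => c * f s) = fun s => c * _root_.deriv f s :=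
      funext fun s => deriv_const_mul c (hf.1 s)
    rw [this]; exact .smul _ _ hf.2

lemma BCls.bd {m : ℕ} (hm : 1 ≤ m) {δ : ℝ} (hδ : 0 < δ) {f : ℝ → ℝ} (h : BCls m δ f) (k : ℕ) :
    ∃ C : ℝ, ∀ s : ℝ, |s| ^ k * |f s| ≤ C := by
  induction h with
  | base a σ => exact bblk_bd m hm δ hδ a σ k
  | add f g _ _ hf hg =>
    obtain ⟨C, hC⟩ := hf
    obtain ⟨D, hD⟩ := hg
    refine ⟨C + D, fun s => ?_⟩
    have := mul_le_mul_of_nonneg_left (abs_add_le (f s) (g s)) (show 0 ≤ |s| ^ k by positivity)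
    linarith [hC s, hD s]
  | smul c f _ hf =>
    obtain ⟨C, hC⟩ := hf
    refine ⟨|c| * C, fun s => ?_⟩
    rw [abs_mul]
    have := mul_le_mul_of_nonneg_left (hC s) (abs_nonneg c)
    linarith

lemma BCls.iter {m : ℕ} (hm : 1 ≤ m) {δ : ℝ} (hδ : 0 < δ) {f : ℝ → ℝ} (h : BCls m δ f) (n : ℕ) :
    BCls m δ (iteratedDeriv n f) := by
  induction n with
  | zero => simpa using h
  | succ n ih => rw [iteratedDeriv_succ]; exact (ih.deriv hm hδ).2

def bSchwartz (m : ℕ) (hm : 1 ≤ m) (δ : ℝ) (hδ : 0 < δ) (a σ : ℝ) : SchwartzMap ℝ ℝ where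
  toFun := bblk m δ a σ
  smooth' := contDiff_of_differentiable_iteratedDeriv
    fun n _ => (((BCls.base a σ).iter hm hδ n).deriv hm hδ).1
  decay' := fun k n => by
    obtain ⟨C, hC⟩ := ((BCls.base (m := m) (δ := δ) a σ).iter hm hδ n).bd hm hδ k
    refine ⟨C, fun x => ?_⟩
    rw [norm_iteratedFDeriv_eq_norm_iteratedDeriv]
    exact hC x

lemma expnorm_decay (d m : ℕ) (hm : 1 ≤ m) (k n : ℕ) : ∃ C : ℝ, ∀ x : Vd d,
    ‖x‖ ^ k * ‖iteratedFDeriv ℝ n (fun ξ : Vd d => Real.exp (-(‖ξ‖ ^ 2) ^ m)) x‖ ≤ C := by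
  have hf : Function.HasTemperateGrowth (fun ξ : Vd d => -(‖ξ‖ ^ 2) ^ m) :=
    ((Function.hasTemperateGrowth_norm_sq (H := Vd d)).pow m).neg
  obtain ⟨l, C, hC0, hC⟩ := hf.norm_iteratedFDeriv_le_uniform n
  refine ⟨n.factorial * (1 + C) ^ n * ((k + l * n).factorial * Real.exp 2), fun x => ?_⟩
  have hx := norm_nonneg x
  have h1 : ‖iteratedFDeriv ℝ n (Real.exp ∘ fun ξ : Vd d => -(‖ξ‖ ^ 2) ^ m) x‖ ≤
      n.factorial * Real.exp (-(‖x‖ ^ 2) ^ m) * ((1 + C) * (1 + ‖x‖) ^ l) ^ n := by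
    refine norm_iteratedFDeriv_comp_le (N := (⊤ : ℕ∞)) Real.contDiff_exp hf.1 (by exact_mod_cast le_top) x ?_ ?_
    · intro i hi
      rw [norm_iteratedFDeriv_eq_norm_iteratedDeriv, iteratedDeriv_eq_iterate, Real.iter_deriv_exp]
      simp
    · intro i h1 hi
      refine (hC i hi x).trans ?_
      have : (1:ℝ) ≤ (1 + C) * (1 + ‖x‖) ^ l :=
        one_le_mul_of_one_le_of_one_le (by linarith) (one_le_pow₀ (by linarith))
      refine le_trans ?_ (le_self_pow₀ this (by omega))
      gcongr; linarith
  have e2 : ‖x‖ - 1 ≤ (‖x‖ ^ 2) ^ m := by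
    rw [← pow_mul]
    rcases le_total 1 ‖x‖ with h | h
    · have := le_self_pow₀ h (show 2 * m ≠ 0 by omega)
      linarith
    · have : 0 ≤ ‖x‖^(2*m) := by positivity
      linarith
  have e3 : Real.exp (-(‖x‖ ^ 2) ^ m) ≤ Real.exp (2 - (1 + ‖x‖)) := by
    apply Real.exp_le_exp.2; linarith
  have e1 := Real.pow_div_factorial_le_exp (1 + ‖x‖) (by positivity) (k + l * n)
  rw [div_le_iff₀ (by positivity)] at e1
  calc _ ≤ (1 + ‖x‖) ^ k * (n.factorial * Real.exp (-(‖x‖ ^ 2) ^ m) * ((1 + C) * (1 + ‖x‖) ^ l) ^ n) := by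
        gcongr
        · linarith
        · exact h1
    _ = n.factorial * (1 + C) ^ n * ((1 + ‖x‖) ^ (k + l * n) * Real.exp (-(‖x‖ ^ 2) ^ m)) := by
        rw [mul_pow, pow_add, pow_mul]; ring
    _ ≤ n.factorial * (1 + C) ^ n * ((Real.exp (1 + ‖x‖) * (k + l * n).factorial) * Real.exp (2 - (1 + ‖x‖))) := by
        gcongr
    _ = n.factorial * (1 + C) ^ n * ((k + l * n).factorial * (Real.exp (1 + ‖x‖) * Real.exp (2 - (1 + ‖x‖)))) := by
        ring
    _ = _ := by rw [← Real.exp_add]; congr 4; ring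

def eSchwartz (d m : ℕ) (hm : 1 ≤ m) : SchwartzMap (Vd d) ℝ where
  toFun := fun ξ : Vd d => Real.exp (-(‖ξ‖ ^ 2) ^ m)
  smooth' := Real.contDiff_exp.comp ((Function.hasTemperateGrowth_norm_sq (H := Vd d)).pow m).neg.1
  decay' := expnorm_decay d m hm

lemma Ppoly_temperate (d m : ℕ) (M : (Fin d → ℕ) → ℂ) : (Ppoly d m M).HasTemperateGrowth := by
  unfold Ppoly
  have hc : ∀ i : Fin d, Function.HasTemperateGrowth (fun ξ : Vd d => (-(Complex.I) * ((ξ i : ℝ) : ℂ))) := by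
    intro i
    exact (Function.HasTemperateGrowth.const _).mul
      ((Complex.ofRealCLM.comp (EuclideanSpace.proj i : Vd d →L[ℝ] ℝ)).hasTemperateGrowth)
  have hp : ∀ (γ : Fin d → ℕ) (s : Finset (Fin d)),
      Function.HasTemperateGrowth (fun ξ : Vd d => ∏ i ∈ s, (-(Complex.I) * ((ξ i : ℝ) : ℂ)) ^ (γ i)) := by
    intro γ s
    induction s using Finset.induction_on with
    | empty => simpa using Function.HasTemperateGrowth.const (E := Vd d) (1 : ℂ)
    | insert i s hi ih =>
      simp only [Finset.prod_insert hi]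
      exact ((hc i).pow (γ i)).mul ih
  exact Function.HasTemperateGrowth.sum fun γ _ => (Function.HasTemperateGrowth.const _).mul (hp γ _)

lemma normsq_upper (d : ℕ) : ∃ (k : ℕ) (C : ℝ), ∀ x : Vd d, ‖x‖ ≤ C * (1 + ‖‖x‖ ^ 2‖) ^ k :=
  ⟨1, 1, fun x => by
    rw [Real.norm_of_nonneg (by positivity)]
    nlinarith [sq_nonneg (‖x‖ - 1), norm_nonneg x]⟩

def phiS (d m : ℕ) (hm : 1 ≤ m) (M : (Fin d → ℕ) → ℂ) (δ : ℝ) (hδ : 0 < δ) : SchwartzMap (Vd d) ℂ :=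
  SchwartzMap.smulLeftCLM ℂ (Ppoly d m M) ((eSchwartz d m hm).postcompCLM Complex.ofRealCLM) +
  (SchwartzMap.compCLM ℝ (Function.hasTemperateGrowth_norm_sq (H := Vd d)) (normsq_upper d)
    (bSchwartz m hm δ hδ ((m + 2) / 2) 0)).postcompCLM Complex.ofRealCLM

lemma phiS_eq (d m : ℕ) (hm : 1 ≤ m) (M : (Fin d → ℕ) → ℂ) (δ : ℝ) (hδ : 0 < δ) (ξ : Vd d) :
    phiS d m hm M δ hδ ξ = phiFun d m M δ ξ := by
  have h1 : phiS d m hm M δ hδ ξ = Ppoly d m M ξ * ((Real.exp (-(‖ξ‖ ^ 2) ^ m) : ℝ) : ℂ) +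
    ((bblk m δ ((m+2)/2) 0 (‖ξ‖ ^ 2) : ℝ) : ℂ) := by
    unfold phiS
    rw [SchwartzMap.add_apply, SchwartzMap.smulLeftCLM_apply_apply (Ppoly_temperate d m M)]
    rfl
  rw [h1, phiFun]
  split_ifs with h
  · subst h
    simp [bblk, show m ≠ 0 by omega]
  · have hp : 0 < ‖ξ‖ := norm_pos_iff.2 h
    have hp2 : 0 < ‖ξ‖ ^ 2 := by positivity
    rw [bblk, if_pos hp2]
    have r1 : (‖ξ‖ ^ 2) ^ (((m:ℝ) + 2)/2) = ‖ξ‖ ^ (m + 2) := by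
      rw [← Real.rpow_natCast, ← Real.rpow_mul hp.le, ← Real.rpow_natCast]; congr 1; push_cast; ring
    have r2 : (‖ξ‖ ^ 2) ^ (-(m:ℝ)/2) = 1 / ‖ξ‖ ^ m := by
      rw [← Real.rpow_natCast, ← Real.rpow_mul hp.le, one_div, ← Real.rpow_natCast ‖ξ‖ m, ← Real.rpow_neg hp.le]
      congr 1; push_cast; ring
    rw [r1, r2, add_zero, pow_mul, sub_eq_add_neg, Real.exp_add]
    push_cast
    ring

lemma jordan_wd {d : ℕ} {f : Vd d → ℝ} (hf : Measurable f) (hfi : Integrable f) :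
    ((SignedMeasure.toJordanDecomposition (volume.withDensityᵥ f)).posPart =
      volume.withDensity fun x => ENNReal.ofReal (f x)) ∧
    ((SignedMeasure.toJordanDecomposition (volume.withDensityᵥ f)).negPart =
      volume.withDensity fun x => ENNReal.ofReal (-f x)) := by
  have h := SignedMeasure.toJordanDecomposition_eq_of_eq_add_withDensity (t := 0)
    (s := (volume : Measure (Vd d)).withDensityᵥ f) hf hfi VectorMeasure.MutuallySingular.zero_left (by simp)
  rw [h]
  simp [SignedMeasure.toJordanDecomposition_zero]

lemma int_jordan {d : ℕ} {f : Vd d → ℝ} (hf : Measurable f) (hfi : Integrable f) (g : Vd d → ℂ)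
    (hg : Continuous g) (hgi : Integrable fun x => (f x : ℂ) * g x) :
    (∫ x, g x ∂(SignedMeasure.toJordanDecomposition (volume.withDensityᵥ f)).posPart) -
    (∫ x, g x ∂(SignedMeasure.toJordanDecomposition (volume.withDensityᵥ f)).negPart) = ∫ x, (f x : ℂ) * g x := by
  rw [(jordan_wd hf hfi).1, (jordan_wd hf hfi).2,
    integral_withDensity_eq_integral_toReal_smul (by fun_prop) (by simp),
    integral_withDensity_eq_integral_toReal_smul (by fun_prop) (by simp), ← integral_sub]
  · congr 1
    ext x
    simp only [ENNReal.toReal_ofReal', Complex.real_smul]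
    rw [← sub_mul, ← Complex.ofReal_sub, max_zero_sub_max_neg_zero_eq_self]
  · refine hgi.mono (Measurable.aestronglyMeasurable (by fun_prop)) ?_
    filter_upwards with x
    simp only [ENNReal.toReal_ofReal', norm_smul, norm_mul, Complex.norm_real]
    gcongr
    rw [Real.norm_of_nonneg (le_max_right _ _), Real.norm_eq_abs]
    exact max_le (le_abs_self _) (abs_nonneg _)
  · refine hgi.mono (Measurable.aestronglyMeasurable (by fun_prop)) ?_
    filter_upwards with x
    simp only [ENNReal.toReal_ofReal', norm_smul, norm_mul, Complex.norm_real]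
    gcongr
    rw [Real.norm_of_nonneg (le_max_right _ _), Real.norm_eq_abs]
    exact max_le (neg_le_abs _) (abs_nonneg _)

def cwd {d : ℕ} (ψ : Vd d → ℂ) : ComplexMeasure (Vd d) :=
  SignedMeasure.toComplexMeasure (volume.withDensityᵥ fun x => (ψ x).re)
    (volume.withDensityᵥ fun x => (ψ x).im)

lemma cwd_apply {d : ℕ} {ψ : Vd d → ℂ} (hi : Integrable ψ) (A : Set (Vd d)) (hA : MeasurableSet A) :
    cwd ψ A = ∫ x in A, ψ x := by
  rw [cwd, SignedMeasure.toComplexMeasure_apply,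
    withDensityᵥ_apply (f := fun x => (ψ x).re) hi.re hA,
    withDensityᵥ_apply (f := fun x => (ψ x).im) hi.im hA]
  apply Complex.ext
  · exact (integral_re hi.integrableOn)
  · exact (integral_im hi.integrableOn)

lemma cint_cwd {d : ℕ} {ψ : Vd d → ℂ} (hc : Continuous ψ) (hi : Integrable ψ) (g : Vd d → ℂ)
    (hg : Continuous g) (hgi : Integrable fun x => ψ x * g x) :
    cint (cwd ψ) g = ∫ x, ψ x * g x := by
  have h1 : Integrable fun x => ((ψ x).re : ℂ) * g x := by
    refine hgi.mono (by fun_prop) ?_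
    filter_upwards with x
    simp only [norm_mul, Complex.norm_real]
    gcongr
    exact Complex.abs_re_le_norm _
  have h2 : Integrable fun x => ((ψ x).im : ℂ) * g x := by
    refine hgi.mono (by fun_prop) ?_
    filter_upwards with x
    simp only [norm_mul, Complex.norm_real]
    gcongr
    exact Complex.abs_im_le_norm _
  unfold cint cwd
  rw [SignedMeasure.re_toComplexMeasure, SignedMeasure.im_toComplexMeasure,
    int_jordan (f := fun x => (ψ x).re) (by fun_prop) hi.re g hg h1, int_jordan (f := fun x => (ψ x).im) (by fun_prop) hi.im g hg h2,
    ← integral_const_mul, ← integral_add h1 (h2.const_mul _)]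
  congr 1
  ext x
  conv_rhs => rw [← Complex.re_add_im (ψ x)]
  ring

lemma ctv_cwd {d : ℕ} {ψ : Vd d → ℂ} (hc : Continuous ψ) (hi : Integrable ψ) (m : ℕ)
    (hm : Integrable fun x => ‖x‖ ^ m * ‖ψ x‖) :
    (∫⁻ x, (‖x‖₊ : ℝ≥0∞) ^ m ∂(ctv (cwd ψ))) < ⊤ := by
  have key : ∀ f : Vd d → ℝ, Measurable f → (∀ x, f x ≤ ‖ψ x‖) →
      ∫⁻ x, (‖x‖₊ : ℝ≥0∞) ^ m ∂(volume.withDensity fun x => ENNReal.ofReal (f x)) < ⊤ := by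
    intro f hf hle
    rw [lintegral_withDensity_eq_lintegral_mul _ (by fun_prop) (by fun_prop)]
    refine lt_of_le_of_lt ?_ hm.2
    apply lintegral_mono
    intro x
    simp only [Pi.mul_apply]
    rw [enorm_mul, enorm_pow, mul_comm, enorm_norm, enorm_norm, enorm_eq_nnnorm x]
    gcongr
    rw [← ofReal_norm]
    exact ENNReal.ofReal_le_ofReal (hle x)
  unfold ctv cwd SignedMeasure.totalVariation
  rw [SignedMeasure.re_toComplexMeasure, SignedMeasure.im_toComplexMeasure]
  have a := jordan_wd (d := d) (f := fun x => (ψ x).re) (by fun_prop) hi.re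
  have b := jordan_wd (d := d) (f := fun x => (ψ x).im) (by fun_prop) hi.im
  rw [a.1, a.2, b.1, b.2]
  simp only [lintegral_add_measure, ENNReal.add_lt_top]
  refine ⟨⟨key _ (by fun_prop) fun x => Complex.re_le_norm _, key _ (by fun_prop) fun x => ?_⟩,
    ⟨key _ (by fun_prop) fun x => Complex.im_le_norm _, key _ (by fun_prop) fun x => ?_⟩⟩
  · exact (neg_le_abs _).trans (Complex.abs_re_le_norm _)
  · exact (neg_le_abs _).trans (Complex.abs_im_le_norm _)

open scoped FourierTransform SchwartzMap

def psiS {d : ℕ} (φ : 𝓢(Vd d, ℂ)) : 𝓢(Vd d, ℂ) :=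
  (((2 * Real.pi) ^ d)⁻¹ : ℝ) • SchwartzMap.compCLMOfContinuousLinearEquiv ℝ
    (ContinuousLinearEquiv.smulLeft (R₁ := ℝ) (M₁ := Vd d)
      (Units.mk0 ((2 * Real.pi)⁻¹ : ℝ) (by positivity))) (𝓕⁻ φ)

lemma psiS_apply' {d : ℕ} (φ : 𝓢(Vd d, ℂ)) (x : Vd d) :
    psiS φ x = (((2 * Real.pi) ^ d)⁻¹ : ℝ) • (𝓕⁻ φ) ((2 * Real.pi)⁻¹ • x) := rfl

lemma psiS_apply {d : ℕ} (φ : 𝓢(Vd d, ℂ)) (x : Vd d) :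
    psiS φ x = ((2 * Real.pi) ^ d)⁻¹ • ∫ ξ : Vd d, φ ξ *
            Complex.exp (Complex.I * ((∑ i, ξ i * x i : ℝ) : ℂ)) := by
  rw [psiS_apply', SchwartzMap.fourierInv_coe, Real.fourierInv_eq']
  congr 1
  congr 1
  ext ξ
  rw [smul_eq_mul, mul_comm]
  congr 2
  rw [inner_smul_right, mul_comm Complex.I]
  congr 2
  rw [← mul_assoc, mul_inv_cancel₀ (by positivity), one_mul, PiLp.inner_apply]
  simp [mul_comm]

lemma ft_psiS {d : ℕ} (φ : 𝓢(Vd d, ℂ)) (ξ : Vd d) :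
    ∫ x, psiS φ x * Complex.exp (-(Complex.I) * ((∑ i, x i * ξ i : ℝ) : ℂ)) = φ ξ := by
  have h : φ ξ = (𝓕 (𝓕⁻ φ)) ξ := by simp
  rw [h, SchwartzMap.fourier_coe, Real.fourier_eq']
  have h2 := Measure.integral_comp_smul (volume : Measure (Vd d))
    (fun v => Complex.exp ((↑(-2 * Real.pi * inner ℝ v ξ) * Complex.I)) • (𝓕⁻ φ) v) ((2 * Real.pi)⁻¹)
  have h3 : |(((2 * Real.pi)⁻¹ : ℝ) ^ Module.finrank ℝ (Vd d))⁻¹| = (2 * Real.pi) ^ d := by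
    rw [finrank_euclideanSpace_fin, abs_of_nonneg (by positivity), inv_pow, inv_inv]
  rw [h3] at h2
  have h4 : ∫ v, Complex.exp ((↑(-2 * Real.pi * inner ℝ v ξ) * Complex.I)) • (𝓕⁻ φ) v =
    (((2 * Real.pi) ^ d)⁻¹ : ℝ) • ((2 * Real.pi) ^ d : ℝ) • ∫ v, Complex.exp ((↑(-2 * Real.pi * inner ℝ v ξ) * Complex.I)) • (𝓕⁻ φ) v := by
    rw [smul_smul, inv_mul_cancel₀ (by positivity), one_smul]
  rw [h4, ← h2, ← integral_smul]
  congr 1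
  ext x
  rw [psiS_apply', smul_mul_assoc, smul_eq_mul, mul_comm (Complex.exp _)]
  congr 3
  rw [inner_smul_left, PiLp.inner_apply]
  have : -2 * Real.pi * ((starRingEnd ℝ) (2 * Real.pi)⁻¹ * ∑ i, inner ℝ (x i) (ξ i)) = -∑ i, x i * ξ i := by
    simp only [conj_trivial]
    rw [← mul_assoc, neg_mul, neg_mul, mul_inv_cancel₀ (by positivity), neg_mul, one_mul]
    simp [mul_comm]
  rw [this]
  push_cast; ring

lemma exp_rem (n : ℕ) (y : ℝ) :
    ‖Complex.exp (-(Complex.I) * (y : ℂ)) - ∑ k ∈ Finset.range n, (-(Complex.I) * (y : ℂ)) ^ k / k.factorial‖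
      ≤ (n + 4) * |y| ^ n := by
  have hz : ‖-(Complex.I) * (y : ℂ)‖ = |y| := by simp
  rcases le_total |y| 1 with h | h
  · have := Complex.norm_exp_sub_sum_le_norm_mul_exp (-(Complex.I) * (y : ℂ)) n
    rw [hz] at this
    refine this.trans ?_
    have e : Real.exp |y| ≤ 4 := by
      have := Real.exp_le_exp.2 h
      have := Real.exp_one_lt_d9
      linarith
    have : (0:ℝ) ≤ |y| ^ n := by positivity
    have : (0:ℝ) ≤ n := by positivity
    nlinarith
  · refine (norm_sub_le _ _).trans ?_
    have h1 : ‖Complex.exp (-(Complex.I) * (y : ℂ))‖ = 1 := by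
      rw [Complex.norm_exp]; simp
    have h2 : ‖∑ k ∈ Finset.range n, (-(Complex.I) * (y : ℂ)) ^ k / k.factorial‖ ≤ n * |y| ^ n := by
      refine (norm_sum_le _ _).trans ?_
      calc _ ≤ ∑ k ∈ Finset.range n, |y| ^ n := by
            apply Finset.sum_le_sum
            intro k hk
            rw [norm_div, norm_pow, hz, Complex.norm_natCast]
            refine (div_le_self (by positivity) (by exact_mod_cast Nat.one_le_iff_ne_zero.2 k.factorial_ne_zero)).trans ?_
            exact pow_le_pow_right₀ h (Finset.mem_range.1 hk).le
        _ = _ := by simp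
    have : 1 ≤ |y| ^ n := one_le_pow₀ h
    rw [h1]; linarith

lemma mem_multiIdx {d m : ℕ} {γ : Fin d → ℕ} : γ ∈ multiIdx d m ↔ ∑ i, γ i ≤ m := by
  unfold multiIdx
  simp only [Finset.mem_filter, Fintype.mem_piFinset, Finset.mem_range, and_iff_right_iff_imp]
  intro h i
  have := Finset.single_le_sum (f := γ) (fun _ _ => Nat.zero_le _) (Finset.mem_univ i)
  omega

lemma multinom (d m : ℕ) (z : Fin d → ℂ) :
    ∑ k ∈ Finset.range (m + 1), (∑ i, z i) ^ k / k.factorial =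
    ∑ γ ∈ multiIdx d m, (∏ i, z i ^ γ i) / ∏ i, ((γ i).factorial : ℂ) := by
  have h : multiIdx d m = (Finset.range (m + 1)).biUnion fun k => Finset.piAntidiag Finset.univ k := by
    ext γ
    rw [mem_multiIdx]
    simp [Finset.mem_piAntidiag, Nat.lt_succ_iff]
  rw [h, Finset.sum_biUnion]
  · apply Finset.sum_congr rfl
    intro k hk
    rw [Finset.sum_pow_eq_sum_piAntidiag, Finset.sum_div]
    apply Finset.sum_congr rfl
    intro γ hγ
    have hs : ∑ i, γ i = k := (Finset.mem_piAntidiag.1 hγ).1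
    have := Nat.multinomial_spec Finset.univ γ
    rw [hs] at this
    have h2 : (∏ i, ((γ i).factorial : ℂ)) * (Nat.multinomial Finset.univ γ : ℂ) = (k.factorial : ℂ) := by
      exact_mod_cast this
    have h3 : (∏ i, ((γ i).factorial : ℂ)) ≠ 0 :=
      Finset.prod_ne_zero_iff.2 fun i _ => by exact_mod_cast (γ i).factorial_ne_zero
    have h4 : (k.factorial : ℂ) ≠ 0 := by exact_mod_cast k.factorial_ne_zero
    rw [div_eq_div_iff h4 h3, ← h2]; ring
  · intro a _ b _ hab
    simp only [Function.onFun]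
    rw [Finset.disjoint_left]
    intro γ h1 h2
    exact hab ((Finset.mem_piAntidiag.1 h1).1.symm.trans (Finset.mem_piAntidiag.1 h2).1)

lemma poly_zero (p : Polynomial ℂ) (m : ℕ) (hp : p.natDegree ≤ m) (C r : ℝ) (hr : 0 < r)
    (h : ∀ t : ℝ, 0 < t → t < r → ‖p.eval (t : ℂ)‖ ≤ C * t ^ (m + 1)) : p = 0 := by
  by_contra hne
  obtain ⟨q, hq, hnd⟩ := Polynomial.exists_eq_pow_rootMultiplicity_mul_and_not_dvd p hne 0
  set n := p.rootMultiplicity 0 with hn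
  have hnm : n ≤ m := by
    have h1 : n ≤ p.natDegree := by
      rw [hn, ← Polynomial.count_roots]
      exact (Multiset.count_le_card _ _).trans (Polynomial.card_roots' p)
    omega
  rw [Polynomial.dvd_iff_isRoot, Polynomial.IsRoot] at hnd
  apply hnd
  have hlim : Tendsto (fun t : ℝ => q.eval (t : ℂ)) (𝓝[>] 0) (𝓝 (q.eval 0)) := by
    have : Continuous fun t : ℝ => q.eval (t : ℂ) := by fun_prop
    have := this.tendsto 0
    simp only [Complex.ofReal_zero] at this
    exact this.mono_left nhdsWithin_le_nhds
  refine tendsto_nhds_unique hlim ?_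
  have hl2 : Tendsto (fun t : ℝ => C * t ^ (m + 1 - n)) (𝓝[>] 0) (𝓝 0) := by
    have : Continuous fun t : ℝ => C * t ^ (m + 1 - n) := by fun_prop
    have := this.tendsto 0
    rw [zero_pow (by omega), mul_zero] at this
    exact this.mono_left nhdsWithin_le_nhds
  refine squeeze_zero_norm' ?_ hl2
  filter_upwards [Ioo_mem_nhdsGT hr] with t ht
  have h1 := h t ht.1 ht.2
  rw [hq] at h1
  simp only [Polynomial.eval_mul, Polynomial.eval_pow, Polynomial.eval_sub, Polynomial.eval_X,
    Polynomial.eval_C, sub_zero, norm_mul, norm_pow, Complex.norm_real, Real.norm_eq_abs, abs_of_pos ht.1, map_zero] at h1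
  have h2 : t ^ (m + 1) = t ^ n * t ^ (m + 1 - n) := by rw [← pow_add]; congr 1; omega
  rw [h2] at h1
  have h3 : 0 < t ^ n := pow_pos ht.1 n
  refine le_of_mul_le_mul_left ?_ h3
  linarith

lemma Ppoly_unique (d m : ℕ) (K : (Fin d → ℕ) → ℂ) (C : ℝ)
    (h : ∀ ξ : Vd d, ‖ξ‖ ≤ 1 → ‖Ppoly d m K ξ‖ ≤ C * ‖ξ‖ ^ (m + 1)) (β : Fin d → ℕ)
    (hβ : ∑ i, β i ≤ m) : K β = 0 := by
  have h0 : ∀ ξ : Vd d, Ppoly d m K ξ = 0 := by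
    intro ξ
    let p : Polynomial ℂ := ∑ γ ∈ multiIdx d m,
      Polynomial.C ((K γ / ∏ i, (Nat.factorial (γ i) : ℂ)) * ∏ i, (-(Complex.I) * (ξ i)) ^ (γ i)) *
        Polynomial.X ^ (∑ i, γ i)
    have hev : ∀ t : ℝ, p.eval (t : ℂ) = Ppoly d m K (t • ξ) := by
      intro t
      simp only [p, Polynomial.eval_finset_sum, Ppoly, Polynomial.eval_mul, Polynomial.eval_C,
        Polynomial.eval_pow, Polynomial.eval_X]
      apply Finset.sum_congr rfl
      intro γ _
      rw [mul_assoc, ← Finset.prod_pow_eq_pow_sum, ← Finset.prod_mul_distrib]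
      congr 1
      apply Finset.prod_congr rfl
      intro i _
      rw [← mul_pow]
      simp only [PiLp.smul_apply, smul_eq_mul, Complex.ofReal_mul]
      ring
    have hp : p = 0 := by
      apply poly_zero p m _ (C * ‖ξ‖ ^ (m + 1)) (1 / (1 + ‖ξ‖)) (by positivity)
      · intro t ht htr
        rw [hev]
        have hn : ‖t • ξ‖ = t * ‖ξ‖ := by rw [norm_smul, Real.norm_of_nonneg ht.le]
        have : ‖t • ξ‖ ≤ 1 := by
          rw [lt_div_iff₀ (by positivity)] at htr
          rw [hn]; nlinarith
        refine (h _ this).trans (le_of_eq ?_)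
        rw [hn, mul_pow]; ring
      · apply Polynomial.natDegree_sum_le_of_forall_le
        intro γ hγ
        exact (Polynomial.natDegree_C_mul_X_pow_le _ _).trans (mem_multiIdx.1 hγ)
    have := hev 1
    rw [hp] at this
    simpa using this.symm
  let Q : MvPolynomial (Fin d) ℂ := ∑ γ ∈ multiIdx d m,
    MvPolynomial.monomial (Finsupp.equivFunOnFinite.symm γ) (K γ / ∏ i, (Nat.factorial (γ i) : ℂ))
  have hQ : Q = 0 := by
    apply MvPolynomial.funext_set (fun _ => Set.range fun t : ℝ => -(Complex.I) * (t : ℂ))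
    · intro _
      apply Set.infinite_range_of_injective
      intro a b hab
      simpa using hab
    · intro x hx
      have : ∀ i, ∃ t : ℝ, -(Complex.I) * (t : ℂ) = x i := fun i => hx i (Set.mem_univ i)
      choose v hv using this
      have := h0 (WithLp.toLp 2 v)
      rw [map_zero, ← this]
      simp only [Q, map_sum, Ppoly]
      apply Finset.sum_congr rfl
      intro γ _
      rw [MvPolynomial.eval_monomial, Finsupp.prod_fintype _ _ (by simp)]
      simp [← hv]
  have hc : MvPolynomial.coeff (Finsupp.equivFunOnFinite.symm β) Q = K β / ∏ i, (Nat.factorial (β i) : ℂ) := by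
    simp only [Q, MvPolynomial.coeff_sum, MvPolynomial.coeff_monomial]
    simp [mem_multiIdx, hβ]
  rw [hQ, MvPolynomial.coeff_zero] at hc
  have h3 : (∏ i, ((β i).factorial : ℂ)) ≠ 0 :=
    Finset.prod_ne_zero_iff.2 fun i _ => by exact_mod_cast (β i).factorial_ne_zero
  rcases div_eq_zero_iff.1 hc.symm with h | h
  · exact h
  · exact absurd h h3

lemma Ppoly_sub (d m : ℕ) (M N : (Fin d → ℕ) → ℂ) (ξ : Vd d) :
    Ppoly d m (fun γ => M γ - N γ) ξ = Ppoly d m M ξ - Ppoly d m N ξ := by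
  unfold Ppoly
  rw [← Finset.sum_sub_distrib]
  apply Finset.sum_congr rfl
  intro γ _
  ring

lemma phi_near (d m : ℕ) (hm : 1 ≤ m) (M : (Fin d → ℕ) → ℂ) (δ : ℝ) (hδ : 0 < δ) :
    ∃ C : ℝ, ∀ ξ : Vd d, ‖ξ‖ ≤ 1 → ‖phiFun d m M δ ξ - Ppoly d m M ξ‖ ≤ C * ‖ξ‖ ^ (m + 1) := by
  have hcont : Continuous (Ppoly d m M) := (Ppoly_temperate d m M).1.continuous
  obtain ⟨B, hB⟩ := (isCompact_closedBall (0 : Vd d) 1).exists_bound_of_continuousOn hcont.continuousOn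
  have hB0 : 0 ≤ B := (norm_nonneg _).trans (hB 0 (by simp))
  refine ⟨B + 1, fun ξ hξ => ?_⟩
  have hr := norm_nonneg ξ
  by_cases h0 : ξ = 0
  · subst h0
    simp only [phiFun, if_true, sub_self, norm_zero]
    positivity
  · rw [phiFun, if_neg h0]
    set s : ℝ := ‖ξ‖ ^ (m + 2) * Real.sin (1 / ‖ξ‖ ^ m) * Real.exp (-δ / ‖ξ‖ ^ 2) with hs
    set e : ℝ := Real.exp (-‖ξ‖ ^ (2 * m)) with he
    have hPb : ‖Ppoly d m M ξ‖ ≤ B := hB ξ (by simpa using hξ)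
    have hp1 : ‖ξ‖ ^ (2 * m) ≤ ‖ξ‖ ^ (m + 1) := pow_le_pow_of_le_one hr hξ (by omega)
    have hp2 : ‖ξ‖ ^ (m + 2) ≤ ‖ξ‖ ^ (m + 1) := pow_le_pow_of_le_one hr hξ (by omega)
    have he1 : e ≤ 1 := Real.exp_le_one_iff.2 (by have : 0 ≤ ‖ξ‖ ^ (2 * m) := by positivity
                                                  linarith)
    have he0 : 0 ≤ e := (Real.exp_pos _).le
    have he2 : |e - 1| ≤ ‖ξ‖ ^ (m + 1) := by
      have := Real.add_one_le_exp (-‖ξ‖ ^ (2 * m))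
      rw [abs_le]; constructor
      · linarith
      · have : 0 ≤ ‖ξ‖ ^ (m + 1) := by positivity
        linarith
    have hs2 : |s| ≤ ‖ξ‖ ^ (m + 1) := by
      rw [hs, abs_mul, abs_mul, abs_of_nonneg (by positivity : 0 ≤ ‖ξ‖ ^ (m + 2)), abs_of_pos (Real.exp_pos _)]
      have h1 := Real.abs_sin_le_one (1 / ‖ξ‖ ^ m)
      have h2 : Real.exp (-δ / ‖ξ‖ ^ 2) ≤ 1 := Real.exp_le_one_iff.2
        (div_nonpos_of_nonpos_of_nonneg (by linarith) (by positivity))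
      calc _ ≤ ‖ξ‖ ^ (m + 2) * 1 * 1 := by gcongr
        _ ≤ _ := by linarith
    have e1 : (Ppoly d m M ξ + (s : ℂ)) * (e : ℂ) - Ppoly d m M ξ =
        Ppoly d m M ξ * ((e - 1 : ℝ) : ℂ) + (s : ℂ) * (e : ℂ) := by push_cast; ring
    rw [e1]
    refine (norm_add_le _ _).trans ?_
    rw [norm_mul, norm_mul, Complex.norm_real, Complex.norm_real, Complex.norm_real, Real.norm_eq_abs,
      Real.norm_eq_abs, Real.norm_of_nonneg he0]
    have a1 : ‖Ppoly d m M ξ‖ * |e - 1| ≤ B * ‖ξ‖ ^ (m + 1) := by gcongr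
    have a2 : |s| * e ≤ ‖ξ‖ ^ (m + 1) * 1 := by gcongr
    linarith

lemma prod_le {d : ℕ} (x : Vd d) (γ : Fin d → ℕ) :
    ‖∏ i, ((x i : ℂ)) ^ (γ i)‖ ≤ ‖x‖ ^ (∑ i, γ i) := by
  rw [norm_prod, ← Finset.prod_pow_eq_pow_sum]
  apply Finset.prod_le_prod
  · intros; positivity
  · intro i _
    rw [norm_pow, Complex.norm_real]
    gcongr
    exact PiLp.norm_apply_le x i

lemma int_mon {d : ℕ} (ψ : SchwartzMap (Vd d) ℂ) (γ : Fin d → ℕ) :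
    Integrable fun x => ψ x * ∏ i, ((x i : ℂ)) ^ (γ i) := by
  refine (ψ.integrable_pow_mul volume (∑ i, γ i)).mono' ?_ ?_
  · have := ψ.continuous
    exact Continuous.aestronglyMeasurable (by fun_prop)
  · filter_upwards with x
    rw [norm_mul, mul_comm]
    gcongr
    exact prod_le x γ

lemma int_exp {d : ℕ} (ψ : SchwartzMap (Vd d) ℂ) (ξ : Vd d) :
    Integrable fun x => ψ x * Complex.exp (-(Complex.I) * ((∑ i, x i * ξ i : ℝ) : ℂ)) := by
  refine (ψ.integrable (μ := volume)).mono ?_ ?_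
  · have := ψ.continuous
    exact Continuous.aestronglyMeasurable (by fun_prop)
  · filter_upwards with x
    rw [norm_mul, Complex.norm_exp]
    simp

lemma taylor {d : ℕ} (ψ : SchwartzMap (Vd d) ℂ) (m : ℕ) :
    ∃ C : ℝ, ∀ ξ : Vd d,
    ‖(∫ x, ψ x * Complex.exp (-(Complex.I) * ((∑ i, x i * ξ i : ℝ) : ℂ))) -
      Ppoly d m (fun γ => ∫ x, ψ x * ∏ i, ((x i : ℂ)) ^ (γ i)) ξ‖ ≤ C * ‖ξ‖ ^ (m + 1) := by
  refine ⟨∫ x, ((m + 1 : ℕ) + 4) * (‖x‖ ^ (m + 1) * ‖ψ x‖), fun ξ => ?_⟩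
  have hT : ∀ x : Vd d, ψ x * ∑ k ∈ Finset.range (m + 1),
      (-(Complex.I) * ((∑ i, x i * ξ i : ℝ) : ℂ)) ^ k / k.factorial =
      ∑ γ ∈ multiIdx d m, ((∏ i, (-(Complex.I) * (ξ i)) ^ (γ i)) / ∏ i, ((γ i).factorial : ℂ)) *
        (ψ x * ∏ i, ((x i : ℂ)) ^ (γ i)) := by
    intro x
    have e : -(Complex.I) * ((∑ i, x i * ξ i : ℝ) : ℂ) =
        ∑ i, (-(Complex.I) * (ξ i)) * ((x i : ℂ)) := by
      push_cast
      rw [Finset.mul_sum]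
      apply Finset.sum_congr rfl
      intros; ring
    rw [e, multinom, Finset.mul_sum]
    apply Finset.sum_congr rfl
    intro γ _
    simp only [mul_pow (-(Complex.I) * _), Finset.prod_mul_distrib]
    ring
  have hP : Ppoly d m (fun γ => ∫ x, ψ x * ∏ i, ((x i : ℂ)) ^ (γ i)) ξ =
      ∫ x, ψ x * ∑ k ∈ Finset.range (m + 1),
      (-(Complex.I) * ((∑ i, x i * ξ i : ℝ) : ℂ)) ^ k / k.factorial := by
    simp_rw [hT]
    rw [integral_finsetSum _ (fun γ _ => (int_mon ψ γ).const_mul _)]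
    unfold Ppoly
    apply Finset.sum_congr rfl
    intro γ _
    rw [integral_const_mul]
    ring
  have hTi : Integrable fun x => ψ x * ∑ k ∈ Finset.range (m + 1),
      (-(Complex.I) * ((∑ i, x i * ξ i : ℝ) : ℂ)) ^ k / k.factorial := by
    simp_rw [hT]
    exact integrable_finsetSum _ (fun γ _ => (int_mon ψ γ).const_mul _)
  rw [hP, ← integral_sub (int_exp ψ ξ) hTi, ← integral_mul_const]
  refine norm_integral_le_of_norm_le
    (((ψ.integrable_pow_mul volume (m + 1)).const_mul _).mul_const _) ?_
  filter_upwards with x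
  rw [← mul_sub, norm_mul]
  have h1 := exp_rem (m + 1) (∑ i, x i * ξ i)
  have h2 : |∑ i, x i * ξ i| ≤ ‖x‖ * ‖ξ‖ := by
    have := abs_real_inner_le_norm x ξ
    rw [PiLp.inner_apply] at this
    simpa [mul_comm] using this
  have h3 : |∑ i, x i * ξ i| ^ (m + 1) ≤ (‖x‖ * ‖ξ‖) ^ (m + 1) := by gcongr
  calc _ ≤ ‖ψ x‖ * (((m + 1 : ℕ) + 4) * (‖x‖ * ‖ξ‖) ^ (m + 1)) := by
        gcongr
        refine h1.trans ?_
        gcongr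
    _ = _ := by rw [mul_pow]; ring

/-- For `m ≥ 2`, prescribed moments `M` and `δ > 0`, there is a complex Borel
measure `μ_{1/δ}` on `ℝ^d`, given by the density `φ̌_δ` (the inverse Fourier transform of `φ_δ`)
with respect to Lebesgue measure, whose Fourier transform equals `φ_δ`, which has finite
absolute moment of order `m`, and whose moments of order `≤ m` are prescribed by `M`;
in particular `μ_{1/δ} ∈ 𝓜_m^M`. -/
theorem stmt3 (d m : ℕ) (hm : 2 ≤ m) (M : (Fin d → ℕ) → ℂ) (δ : ℝ) (hδ : 0 < δ) :
    ∃ μ : ComplexMeasure (Vd d),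
      (∀ A : Set (Vd d), MeasurableSet A →
        μ A = ∫ x in A, ((2 * Real.pi) ^ d)⁻¹ •
          ∫ ξ : Vd d, phiFun d m M δ ξ *
            Complex.exp (Complex.I * ((∑ i, ξ i * x i : ℝ) : ℂ))) ∧
      ftc μ = phiFun d m M δ ∧
      μ ∈ MomentSet d m M := by
  have hm1 : 1 ≤ m := by omega
  set φ := phiS d m hm1 M δ hδ with hφ
  have hφe : ∀ ξ, φ ξ = phiFun d m M δ ξ := phiS_eq d m hm1 M δ hδ
  set ψ := psiS φ with hψ
  have hc : Continuous ψ := ψ.continuous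
  have hi : Integrable ψ := ψ.integrable
  have hmom : ∀ β : Fin d → ℕ, ∑ i, β i ≤ m → ∫ x, ψ x * ∏ i, ((x i : ℂ)) ^ (β i) = M β := by
    intro β hβ
    obtain ⟨C1, h1⟩ := phi_near d m hm1 M δ hδ
    obtain ⟨C2, h2⟩ := taylor ψ m
    have := Ppoly_unique d m
      (fun γ => (∫ x, ψ x * ∏ i, ((x i : ℂ)) ^ (γ i)) - M γ) (C1 + C2) (fun ξ hξ => ?_) β hβ
    · exact sub_eq_zero.1 this
    · rw [Ppoly_sub d m (fun γ => (∫ x, ψ x * ∏ i, ((x i : ℂ)) ^ (γ i))) M]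
      have a1 := h1 ξ hξ
      have a2 := h2 ξ
      rw [hψ, ft_psiS, hφe, ← hψ] at a2
      rw [norm_sub_rev] at a2
      have := norm_add_le (Ppoly d m (fun γ => ∫ x, ψ x * ∏ i, ((x i : ℂ)) ^ (γ i)) ξ - phiFun d m M δ ξ)
        (phiFun d m M δ ξ - Ppoly d m M ξ)
      rw [sub_add_sub_cancel] at this
      linarith
  refine ⟨cwd ψ, ?_, ?_, ?_, ?_⟩
  · intro A hA
    rw [cwd_apply hi A hA]
    congr 1
    ext x
    rw [hψ, psiS_apply]
    simp_rw [hφe]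
  · funext ξ
    rw [ftc, cint_cwd hc hi _ (by fun_prop) (int_exp ψ ξ), hψ, ft_psiS, hφe]
  · exact ctv_cwd hc hi m (ψ.integrable_pow_mul volume m)
  · intro β hβ
    rw [cint_cwd hc hi _ (by fun_prop) (int_mon ψ β), hmom β hβ]

end
end

section
/- Fix an integer m ≥ 2 and M = {M_β}_{|β|≤m} ⊆ ℂ. For each δ > 0 and each multi-index β with |β| ≤ m, the function φ_δ satisfies (D^β φ_δ)(0) = (−i)^{|β|} M_β. -/
open MeasureTheory Filter Topology
open scoped ENNReal NNReal

noncomputable section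
open scoped Classical


open scoped ContDiff

lemma pderiv1_eq {d : ℕ} {F : Type*} [NormedAddCommGroup F] [NormedSpace ℝ F]
    {f : Vd d → F} {L : Vd d →L[ℝ] F} {ξ : Vd d} (h : HasFDerivAt f L ξ) (i : Fin d) :
    pderiv1 i f ξ = L (EuclideanSpace.single i 1) := by
  unfold pderiv1
  rw [h.fderiv]

lemma pderiv1_add {d : ℕ} {F : Type*} [NormedAddCommGroup F] [NormedSpace ℝ F]
    {f g : Vd d → F} {ξ : Vd d} (hf : DifferentiableAt ℝ f ξ) (hg : DifferentiableAt ℝ g ξ)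
    (i : Fin d) :
    pderiv1 i (fun x => f x + g x) ξ = pderiv1 i f ξ + pderiv1 i g ξ := by
  rw [pderiv1_eq (hf.hasFDerivAt.fun_add hg.hasFDerivAt)]
  rfl

lemma pderiv1_mul {d : ℕ} {F : Type*} [NormedCommRing F] [NormedAlgebra ℝ F]
    {f g : Vd d → F} {ξ : Vd d} (hf : DifferentiableAt ℝ f ξ) (hg : DifferentiableAt ℝ g ξ)
    (i : Fin d) :
    pderiv1 i (fun x => f x * g x) ξ = pderiv1 i f ξ * g ξ + f ξ * pderiv1 i g ξ := by
  rw [pderiv1_eq (hf.hasFDerivAt.fun_mul hg.hasFDerivAt)]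
  simp [pderiv1]
  ring

lemma pderiv1_contDiff {d : ℕ} {F : Type*} [NormedAddCommGroup F] [NormedSpace ℝ F]
    {f : Vd d → F} (hf : ContDiff ℝ ∞ f) (i : Fin d) : ContDiff ℝ ∞ (pderiv1 i f) := by
  unfold pderiv1
  exact (hf.fderiv_right (by simp)).clm_apply contDiff_const

lemma cd_diff {d : ℕ} {F : Type*} [NormedAddCommGroup F] [NormedSpace ℝ F]
    {f : Vd d → F} (hf : ContDiff ℝ ∞ f) : Differentiable ℝ f :=
  hf.differentiable (by simp)

/-- Smooth functions all of whose derivatives of order less than `k` vanish at the origin. -/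
def Van {d : ℕ} : ℕ → (Vd d → ℂ) → Prop
  | 0, f => ContDiff ℝ ∞ f
  | k + 1, f => ContDiff ℝ ∞ f ∧ f 0 = 0 ∧ ∀ i, Van k (pderiv1 i f)

lemma Van.cd {d k : ℕ} {f : Vd d → ℂ} (h : Van k f) : ContDiff ℝ ∞ f := by
  cases k with
  | zero => exact h
  | succ k => exact h.1

lemma Van.down {d k : ℕ} : ∀ {f : Vd d → ℂ}, Van (k + 1) f → Van k f := by
  induction k with
  | zero => intro f h; exact h.1
  | succ k ih => intro f h; exact ⟨h.1, h.2.1, fun i => ih (h.2.2 i)⟩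

lemma Van.mono {d k l : ℕ} {f : Vd d → ℂ} (h : Van k f) (hl : l ≤ k) : Van l f := by
  induction hl with
  | refl => exact h
  | step _ ih => exact ih h.down

lemma Van.pd {d k : ℕ} {f : Vd d → ℂ} (h : Van k f) (i : Fin d) : Van (k - 1) (pderiv1 i f) := by
  cases k with
  | zero => exact pderiv1_contDiff h i
  | succ k => exact h.2.2 i

lemma Van.add {d k : ℕ} : ∀ {f g : Vd d → ℂ}, Van k f → Van k g → Van k (fun x => f x + g x) := by
  induction k with
  | zero => intro f g hf hg; exact ContDiff.add hf hg
  | succ k ih =>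
    intro f g hf hg
    refine ⟨hf.1.add hg.1, by simp [hf.2.1, hg.2.1], fun i => ?_⟩
    have : pderiv1 i (fun x => f x + g x) = fun x => pderiv1 i f x + pderiv1 i g x := by
      funext x
      exact pderiv1_add (cd_diff hf.1 x) (cd_diff hg.1 x) i
    rw [this]
    exact ih (hf.2.2 i) (hg.2.2 i)

lemma Van.mul {d n : ℕ} : ∀ {k l : ℕ} {f g : Vd d → ℂ}, n ≤ k + l → Van k f → Van l g →
    Van n (fun x => f x * g x) := by
  induction n with
  | zero => intro k l f g _ hf hg; exact ContDiff.mul hf.cd hg.cd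
  | succ n ih =>
    intro k l f g hn hf hg
    refine ⟨hf.cd.mul hg.cd, ?_, fun i => ?_⟩
    · cases k with
      | succ k => simp [hf.2.1]
      | zero =>
        cases l with
        | succ l => simp [hg.2.1]
        | zero => omega
    have : pderiv1 i (fun x => f x * g x)
        = fun x => pderiv1 i f x * g x + f x * pderiv1 i g x := by
      funext x
      exact pderiv1_mul (cd_diff hf.cd x) (cd_diff hg.cd x) i
    rw [this]
    exact Van.add (ih (by omega) (hf.pd i) hg) (ih (by omega) hf (hg.pd i))

lemma van_normsq {d : ℕ} : Van 2 (fun x : Vd d => ((‖x‖ ^ 2 : ℝ) : ℂ)) := by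
  have hc : ContDiff ℝ ∞ (fun x : Vd d => ((‖x‖ ^ 2 : ℝ) : ℂ)) :=
    Complex.ofRealCLM.contDiff.comp (contDiff_norm_sq ℝ)
  refine ⟨hc, by simp, fun i => ⟨pderiv1_contDiff hc i, ?_, fun j => ?_⟩⟩
  · have h := (Complex.ofRealCLM.hasFDerivAt).comp (0 : Vd d)
      (hasStrictFDerivAt_norm_sq (0 : Vd d)).hasFDerivAt
    have h2 := pderiv1_eq h i
    simp at h2
    exact h2
  · exact pderiv1_contDiff (pderiv1_contDiff hc i) j

lemma van_pow {d : ℕ} (m : ℕ) : Van (2 * m) (fun x : Vd d => (((‖x‖ ^ 2 : ℝ) : ℂ)) ^ m) := by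
  induction m with
  | zero => simp only [pow_zero]; exact contDiff_const
  | succ m ih =>
    simp only [pow_succ _ m]
    exact Van.mul (by omega) ih van_normsq

lemma van_exp {d k : ℕ} {g : Vd d → ℂ} (hg : Van (k + 1) g) :
    Van (k + 1) (fun x => Complex.exp (- g x) - 1) := by
  have he : ContDiff ℝ ∞ (fun x => Complex.exp (- g x)) := hg.1.neg.cexp
  refine ⟨he.sub contDiff_const, by simp [hg.2.1], fun i => ?_⟩
  have : pderiv1 i (fun x => Complex.exp (- g x) - 1)
      = fun x => pderiv1 i g x * (- Complex.exp (- g x)) := by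
    funext x
    have h := ((cd_diff hg.1 x).hasFDerivAt.fun_neg.cexp).sub_const 1
    rw [pderiv1_eq h]
    simp [pderiv1]
    ring
  rw [this]
  exact Van.mul (l := 0) (by omega) (hg.2.2 i) he.neg

/-- Functions off the origin of polynomial growth, stable under differentiation. -/
inductive Tame (d m : ℕ) : (Vd d → ℝ) → Prop
  | smooth (f : Vd d → ℝ) : ContDiff ℝ ∞ f → Tame d m f
  | inv : Tame d m (fun x => ‖x‖⁻¹)
  | sin : Tame d m (fun x => Real.sin (‖x‖⁻¹ ^ m))
  | cos : Tame d m (fun x => Real.cos (‖x‖⁻¹ ^ m))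
  | add (f g : Vd d → ℝ) : Tame d m f → Tame d m g → Tame d m (fun x => f x + g x)
  | mul (f g : Vd d → ℝ) : Tame d m f → Tame d m g → Tame d m (fun x => f x * g x)

lemma Tame.const {d m : ℕ} (c : ℝ) : Tame d m (fun _ => c) := Tame.smooth _ contDiff_const

lemma Tame.pow {d m : ℕ} {f : Vd d → ℝ} (h : Tame d m f) (n : ℕ) :
    Tame d m (fun x => f x ^ n) := by
  induction n with
  | zero => simp only [pow_zero]; exact Tame.const 1
  | succ n ih => simp only [pow_succ]; exact Tame.mul _ _ ih h

lemma Tame.coord {d m : ℕ} (i : Fin d) : Tame d m (fun x => x i) :=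
  Tame.smooth _ (by fun_prop)

lemma hasFDeriv_inv {d : ℕ} {ξ : Vd d} (h : ξ ≠ 0) :
    HasFDerivAt (fun x : Vd d => ‖x‖⁻¹) (-(‖ξ‖⁻¹ ^ 3) • innerSL ℝ ξ) ξ := by
  have hn : ‖ξ‖ ≠ 0 := norm_ne_zero_iff.mpr h
  have h1 := ((hasStrictFDerivAt_norm_sq ξ).hasFDerivAt).sqrt (pow_ne_zero 2 hn)
  have h2 : (fun x : Vd d => √(‖x‖ ^ 2)) = fun x => ‖x‖ := by
    funext x; exact Real.sqrt_sq (norm_nonneg _)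
  rw [h2, Real.sqrt_sq (norm_nonneg _)] at h1
  have h3 := (hasDerivAt_inv hn).comp_hasFDerivAt ξ h1
  refine h3.congr_fderiv ?_
  ext v
  simp
  field_simp

lemma inner_single {d : ℕ} (ξ : Vd d) (i : Fin d) :
    innerSL ℝ ξ (EuclideanSpace.single i 1) = ξ i := by
  simp [EuclideanSpace.inner_single_right]

lemma Tame.bound {d m : ℕ} {a : Vd d → ℝ} (h : Tame d m a) :
    ∃ (C : ℝ) (N : ℕ), 0 ≤ C ∧ ∀ ξ : Vd d, ξ ≠ 0 → ‖ξ‖ ≤ 1 → |a ξ| ≤ C * ‖ξ‖⁻¹ ^ N := by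
  induction h with
  | smooth f hf =>
    obtain ⟨C, hC⟩ := (isCompact_closedBall (0 : Vd d) 1).exists_bound_of_continuousOn
      hf.continuous.continuousOn
    refine ⟨|C|, 0, abs_nonneg _, fun ξ _ h => ?_⟩
    have := hC ξ (by simpa using h)
    simpa using this.trans (le_abs_self C)
  | inv => exact ⟨1, 1, zero_le_one, fun ξ _ _ => by simp⟩
  | sin => exact ⟨1, 0, zero_le_one, fun ξ _ _ => by simpa using Real.abs_sin_le_one _⟩
  | cos => exact ⟨1, 0, zero_le_one, fun ξ _ _ => by simpa using Real.abs_cos_le_one _⟩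
  | add f g _ _ hf hg =>
    obtain ⟨C, N, hC, h1⟩ := hf
    obtain ⟨D, K, hD, h2⟩ := hg
    refine ⟨C + D, N + K, by positivity, fun ξ h0 hξ => ?_⟩
    have hr : 1 ≤ ‖ξ‖⁻¹ := (one_le_inv₀ (norm_pos_iff.mpr h0)).mpr hξ
    calc |f ξ + g ξ| ≤ |f ξ| + |g ξ| := abs_add_le _ _
      _ ≤ C * ‖ξ‖⁻¹ ^ N + D * ‖ξ‖⁻¹ ^ K := add_le_add (h1 ξ h0 hξ) (h2 ξ h0 hξ)
      _ ≤ C * ‖ξ‖⁻¹ ^ (N + K) + D * ‖ξ‖⁻¹ ^ (N + K) := by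
        gcongr <;> first | exact hr | omega
      _ = _ := by ring
  | mul f g _ _ hf hg =>
    obtain ⟨C, N, hC, h1⟩ := hf
    obtain ⟨D, K, hD, h2⟩ := hg
    refine ⟨C * D, N + K, by positivity, fun ξ h0 hξ => ?_⟩
    calc |f ξ * g ξ| = |f ξ| * |g ξ| := abs_mul _ _
      _ ≤ (C * ‖ξ‖⁻¹ ^ N) * (D * ‖ξ‖⁻¹ ^ K) :=
        mul_le_mul (h1 ξ h0 hξ) (h2 ξ h0 hξ) (abs_nonneg _) (by positivity)
      _ = _ := by ring

lemma Tame.deriv {d m : ℕ} {a : Vd d → ℝ} (h : Tame d m a) (i : Fin d) :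
    ∃ b, Tame d m b ∧ ∀ ξ : Vd d, ξ ≠ 0 → DifferentiableAt ℝ a ξ ∧ pderiv1 i a ξ = b ξ := by
  have hinv : Tame d m (fun x => (-1) * (‖x‖⁻¹ ^ 3 * x i)) :=
    .mul _ _ (.const _) (.mul _ _ (.pow .inv 3) (.coord i))
  have hpow : Tame d m (fun x => (m * ‖x‖⁻¹ ^ (m - 1)) * ((-1) * (‖x‖⁻¹ ^ 3 * x i))) :=
    .mul _ _ (.mul _ _ (.const _) (.pow .inv _)) hinv
  induction h with
  | smooth f hf => exact ⟨_, .smooth _ (pderiv1_contDiff hf i), fun ξ _ => ⟨cd_diff hf ξ, rfl⟩⟩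
  | inv =>
    refine ⟨_, hinv, fun ξ h => ⟨(hasFDeriv_inv h).differentiableAt, ?_⟩⟩
    rw [pderiv1_eq (hasFDeriv_inv h), smul_apply, inner_single]
    simp
  | sin =>
    refine ⟨_, .mul _ _ .cos hpow, fun ξ h => ?_⟩
    have hh := ((hasFDeriv_inv h).pow m).sin
    refine ⟨hh.differentiableAt, ?_⟩
    rw [pderiv1_eq hh]
    simp only [smul_apply, inner_single]
    simp
    try ring
  | cos =>
    refine ⟨_, .mul _ _ (.mul _ _ (.const (-1)) .sin) hpow, fun ξ h => ?_⟩
    have hh := ((hasFDeriv_inv h).pow m).cos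
    refine ⟨hh.differentiableAt, ?_⟩
    rw [pderiv1_eq hh]
    simp only [smul_apply, inner_single]
    simp
    try ring
  | add f g _ _ hf hg =>
    obtain ⟨b, hb, h1⟩ := hf
    obtain ⟨c, hc, h2⟩ := hg
    refine ⟨_, .add _ _ hb hc, fun ξ h => ⟨(h1 ξ h).1.add (h2 ξ h).1, ?_⟩⟩
    rw [pderiv1_add (h1 ξ h).1 (h2 ξ h).1, (h1 ξ h).2, (h2 ξ h).2]
  | mul f g tf tg hf hg =>
    obtain ⟨b, hb, h1⟩ := hf
    obtain ⟨c, hc, h2⟩ := hg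
    refine ⟨_, .add _ _ (.mul _ _ hb tg) (.mul _ _ tf hc),
      fun ξ h => ⟨(h1 ξ h).1.mul (h2 ξ h).1, ?_⟩⟩
    rw [pderiv1_mul (h1 ξ h).1 (h2 ξ h).1, (h1 ξ h).2, (h2 ξ h).2]

/-- The flat function built on `a`. -/
def Gf {d : ℕ} (δ : ℝ) (a : Vd d → ℝ) (ξ : Vd d) : ℝ :=
  if ξ = 0 then 0 else a ξ * Real.exp (-δ * ‖ξ‖⁻¹ ^ 2)

lemma Gf_bound {d m : ℕ} {δ : ℝ} (hδ : 0 < δ) {a : Vd d → ℝ} (h : Tame d m a) :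
    ∃ C : ℝ, ∀ ξ : Vd d, ‖ξ‖ ≤ 1 → |Gf δ a ξ| ≤ C * ‖ξ‖ ^ 2 := by
  obtain ⟨C, N, hC, hb⟩ := h.bound
  refine ⟨C * ((N + 2).factorial / δ ^ (N + 2)), fun ξ hξ => ?_⟩
  by_cases h0 : ξ = 0
  · simp [Gf, h0]
  have hp : 0 < ‖ξ‖ := norm_pos_iff.mpr h0
  simp only [Gf, h0, if_false]
  have he : Real.exp (-δ * ‖ξ‖⁻¹ ^ 2) ≤ (N + 2).factorial / δ ^ (N + 2) * ‖ξ‖ ^ (2 * (N + 2)) := by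
    have hx := Real.pow_div_factorial_le_exp (δ * ‖ξ‖⁻¹ ^ 2) (by positivity) (N + 2)
    rw [neg_mul, Real.exp_neg]
    have hy := inv_anti₀ (by positivity) hx
    refine hy.trans (le_of_eq ?_)
    rw [mul_pow, ← pow_mul, inv_pow]
    field_simp
  rw [abs_mul, abs_of_pos (Real.exp_pos _)]
  calc |a ξ| * Real.exp (-δ * ‖ξ‖⁻¹ ^ 2)
      ≤ (C * ‖ξ‖⁻¹ ^ N) * ((N + 2).factorial / δ ^ (N + 2) * ‖ξ‖ ^ (2 * (N + 2))) :=
        mul_le_mul (hb ξ h0 hξ) he (Real.exp_pos _).le (by positivity)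
    _ = C * ((N + 2).factorial / δ ^ (N + 2)) * ‖ξ‖ ^ (N + 4) := by
        rw [show 2 * (N + 2) = N + (N + 4) by ring, pow_add _ N (N + 4), inv_pow]
        field_simp
    _ ≤ _ := by
        gcongr ?_ * ?_
        exact pow_le_pow_of_le_one hp.le hξ (by omega)

lemma Gf_zero {d m : ℕ} {δ : ℝ} (hδ : 0 < δ) {a : Vd d → ℝ} (h : Tame d m a) :
    HasFDerivAt (Gf δ a) (0 : Vd d →L[ℝ] ℝ) 0 := by
  obtain ⟨C, hC⟩ := Gf_bound hδ h
  have hO : (Gf δ a) =O[𝓝 0] (fun x : Vd d => ‖x - 0‖ ^ 2) := by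
    refine Asymptotics.IsBigO.of_bound C ?_
    filter_upwards [Metric.closedBall_mem_nhds (0 : Vd d) zero_lt_one] with x hx
    have := hC x (by simpa using hx)
    simpa using this
  exact hO.hasFDerivAt (by norm_num)

lemma Gf_deriv {d m : ℕ} {δ : ℝ} (hδ : 0 < δ) {a : Vd d → ℝ} (h : Tame d m a) (i : Fin d) :
    Differentiable ℝ (Gf δ a) ∧ ∃ b, Tame d m b ∧ pderiv1 i (Gf δ a) = Gf δ b := by
  obtain ⟨b, hb, hd⟩ := h.deriv i
  have key : ∀ ξ : Vd d, ξ ≠ 0 → HasFDerivAt (Gf δ a)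
      (a ξ • (Real.exp (-δ * ‖ξ‖⁻¹ ^ 2) • ((-δ) • ((2 * ‖ξ‖⁻¹) • (-(‖ξ‖⁻¹ ^ 3) • innerSL ℝ ξ))))
        + Real.exp (-δ * ‖ξ‖⁻¹ ^ 2) • fderiv ℝ a ξ) ξ := by
    intro ξ h0
    have h1 := (((hasFDeriv_inv h0).pow 2).const_mul (-δ)).exp
    have h2 := (hd ξ h0).1.hasFDerivAt.mul h1
    have h3 : Gf δ a =ᶠ[𝓝 ξ] (fun x => a x * Real.exp (-δ * ‖x‖⁻¹ ^ 2)) := by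
      filter_upwards [isOpen_ne.mem_nhds h0] with x hx
      have hx' : x ≠ 0 := hx
      simp [Gf, hx']
    refine (h2.congr_of_eventuallyEq h3).congr_fderiv ?_
    ext v
    simp
  refine ⟨fun ξ => ?_, fun x => b x + a x * ((2 * δ) * (‖x‖⁻¹ ^ 4 * x i)),
    .add _ _ hb (.mul _ _ h (.mul _ _ (.const _) (.mul _ _ (.pow .inv 4) (.coord i)))), ?_⟩
  · by_cases h0 : ξ = 0
    · rw [h0]; exact (Gf_zero hδ h).differentiableAt
    · exact (key ξ h0).differentiableAt
  · funext ξ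
    by_cases h0 : ξ = 0
    · rw [h0, pderiv1_eq (Gf_zero hδ h)]; simp [Gf]
    · rw [pderiv1_eq (key ξ h0)]
      have := (hd ξ h0).2
      unfold pderiv1 at this
      simp only [smul_apply, add_apply, inner_single, this]
      simp only [Gf, h0, if_false, smul_eq_mul]
      ring

/-- One-variable `s`-th derivative of `(-i x)^g / g!`. -/
def hm1 (s g : ℕ) (x : ℝ) : ℂ :=
  if s ≤ g then (-Complex.I) ^ s * (-Complex.I * x) ^ (g - s) / ((g - s).factorial : ℂ) else 0

lemma hm1_deriv (s g : ℕ) (x : ℝ) : HasDerivAt (hm1 s g) (hm1 (s + 1) g x) x := by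
  have hfun : hm1 s g = fun x : ℝ => if s ≤ g then
    (-Complex.I) ^ s * (-Complex.I * x) ^ (g - s) / ((g - s).factorial : ℂ) else 0 := rfl
  rw [hfun]
  by_cases h : s ≤ g
  · obtain ⟨n, rfl⟩ := Nat.exists_eq_add_of_le h
    simp only [h, if_true, Nat.add_sub_cancel_left]
    have h1 : HasDerivAt (fun x : ℝ => -Complex.I * (x : ℂ)) (-Complex.I * 1) x :=
      (Complex.ofRealCLM.hasDerivAt (x := x)).const_mul _
    have h2 := ((h1.pow n).const_mul ((-Complex.I) ^ s)).div_const (n.factorial : ℂ)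
    refine h2.congr_deriv ?_
    cases n with
    | zero => simp [hm1]
    | succ n =>
      have hne : (n.factorial : ℂ) ≠ 0 := by exact_mod_cast n.factorial_ne_zero
      have hne2 : (n + 1 : ℂ) ≠ 0 := by exact_mod_cast n.succ_ne_zero
      have : s + (n + 1) - (s + 1) = n := by omega
      simp only [hm1, this, show s + 1 ≤ s + (n + 1) by omega, if_true, Nat.factorial_succ]
      push_cast
      field_simp
      ring
  · have h' : ¬ (s + 1 ≤ g) := by omega
    simp only [h, if_false, hm1, h']
    exact hasDerivAt_const _ _

lemma hm1_cd (s g : ℕ) : ContDiff ℝ ∞ (hm1 s g) := by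
  unfold hm1
  by_cases h : s ≤ g
  · simp only [h, if_true]
    have : ContDiff ℝ ∞ (fun x : ℝ => (x : ℂ)) := Complex.ofRealCLM.contDiff
    exact (contDiff_const.mul ((contDiff_const.mul this).pow _)).div_const _
  · simp only [h, if_false]; exact contDiff_const

/-- The derivative of order `σ` of the polynomial. -/
def PS (d m : ℕ) (M : (Fin d → ℕ) → ℂ) (σ : Fin d → ℕ) (ξ : Vd d) : ℂ :=
  ∑ γ ∈ multiIdx d m, M γ * ∏ j, hm1 (σ j) (γ j) (ξ j)

lemma PS_cd (d m : ℕ) (M : (Fin d → ℕ) → ℂ) (σ : Fin d → ℕ) : ContDiff ℝ ∞ (PS d m M σ) := by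
  unfold PS
  refine ContDiff.sum fun γ _ => contDiff_const.mul (contDiff_prod fun j _ => ?_)
  exact (hm1_cd _ _).comp (by fun_prop : ContDiff ℝ ∞ fun x : Vd d => x j)

lemma PS_deriv (d m : ℕ) (M : (Fin d → ℕ) → ℂ) (σ : Fin d → ℕ) (i : Fin d) :
    pderiv1 i (PS d m M σ) = PS d m M (σ + Pi.single i 1) := by
  funext ξ
  have hj : ∀ (γ : Fin d → ℕ) (j : Fin d), HasFDerivAt (fun x : Vd d => hm1 (σ j) (γ j) (x j))
      ((EuclideanSpace.proj j : Vd d →L[ℝ] ℝ).smulRight (hm1 (σ j + 1) (γ j) (ξ j))) ξ := by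
    intro γ j
    have h1 := (hm1_deriv (σ j) (γ j) (ξ j)).hasFDerivAt
    have h2 := h1.comp ξ (EuclideanSpace.proj j : Vd d →L[ℝ] ℝ).hasFDerivAt
    refine h2.congr_fderiv ?_
    ext v
    simp
  have hP : HasFDerivAt (PS d m M σ) _ ξ := HasFDerivAt.fun_sum fun γ (_ : γ ∈ multiIdx d m) =>
    (HasFDerivAt.finsetProd (u := Finset.univ) fun j _ => hj γ j).const_mul (M γ)
  rw [pderiv1_eq hP]
  simp only [PS, ContinuousLinearMap.sum_apply, smul_apply]
  refine Finset.sum_congr rfl fun γ _ => ?_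
  rw [smul_eq_mul]
  congr 1
  rw [Finset.sum_eq_single i]
  · rw [← Finset.mul_prod_erase Finset.univ _ (Finset.mem_univ i)]
    simp
    rw [mul_comm]
    congr 1
    refine Finset.prod_congr rfl fun j hj => ?_
    have : j ≠ i := Finset.ne_of_mem_erase hj
    simp [this]
  · intro j _ hji
    simp [hji]
  · simp

lemma PS_zero (d m : ℕ) (M : (Fin d → ℕ) → ℂ) : PS d m M 0 = Ppoly d m M := by
  funext ξ
  unfold PS Ppoly
  refine Finset.sum_congr rfl fun γ _ => ?_
  simp only [hm1, Pi.zero_apply, Nat.zero_le, if_true, pow_zero, one_mul, Nat.sub_zero,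
    Finset.prod_div_distrib]
  ring

lemma hm1_zero (s g : ℕ) : hm1 s g 0 = if g = s then (-Complex.I) ^ s else 0 := by
  unfold hm1
  by_cases h : s ≤ g
  · obtain ⟨n, rfl⟩ := Nat.exists_eq_add_of_le h
    cases n <;> simp
  · have : g ≠ s := by omega
    simp [h, this]

lemma PS_at (d m : ℕ) (M : (Fin d → ℕ) → ℂ) (β : Fin d → ℕ) (hβ : ∑ i, β i ≤ m) :
    PS d m M β 0 = (-Complex.I) ^ (∑ i, β i) * M β := by
  unfold PS
  rw [Finset.sum_eq_single β]
  · simp only [PiLp.zero_apply, hm1_zero, if_true]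
    rw [Finset.prod_pow_eq_pow_sum, mul_comm]
  · intro γ _ hγ
    obtain ⟨j, hj⟩ := Function.ne_iff.mp hγ
    rw [Finset.prod_eq_zero (Finset.mem_univ j), mul_zero]
    simp [hm1_zero, hj]
  · intro h
    exfalso
    apply h
    simp only [multiIdx, Finset.mem_filter, Fintype.mem_piFinset, Finset.mem_range]
    refine ⟨fun i => ?_, hβ⟩
    have := Finset.single_le_sum (f := β) (fun _ _ => Nat.zero_le _) (Finset.mem_univ i)
    omega

/-- Invariant along the iterated differentiation. -/
def PhiRel (d m : ℕ) (M : (Fin d → ℕ) → ℂ) (δ : ℝ) (k : ℕ) (σ : Fin d → ℕ) (f : Vd d → ℂ) : Prop :=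
  ∃ (v : Vd d → ℂ) (a : Vd d → ℝ), Van k v ∧ Tame d m a ∧
    f = fun x => (PS d m M σ x + v x) + ((Gf δ a x : ℝ) : ℂ)

lemma PhiRel.pd {d m : ℕ} {M : (Fin d → ℕ) → ℂ} {δ : ℝ} (hδ : 0 < δ) {k : ℕ} {σ : Fin d → ℕ}
    {f : Vd d → ℂ} (h : PhiRel d m M δ (k + 1) σ f) (i : Fin d) :
    PhiRel d m M δ k (σ + Pi.single i 1) (pderiv1 i f) := by
  obtain ⟨v, a, hv, ha, rfl⟩ := h
  obtain ⟨hG, b, hb, hGb⟩ := Gf_deriv hδ ha i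
  refine ⟨pderiv1 i v, b, hv.2.2 i, hb, ?_⟩
  funext x
  have hG' := Complex.ofRealCLM.hasFDerivAt.comp x (hG x).hasFDerivAt
  have hG2 : DifferentiableAt ℝ (fun x => ((Gf δ a x : ℝ) : ℂ)) x := hG'.differentiableAt
  have hG3 : pderiv1 i (fun x => ((Gf δ a x : ℝ) : ℂ)) x = ((Gf δ b x : ℝ) : ℂ) := by
    rw [← hGb]
    exact pderiv1_eq hG' i
  have hp := cd_diff (PS_cd d m M σ) x
  have hv' := cd_diff hv.1 x
  rw [pderiv1_add (hp.fun_add hv') hG2, hG3, pderiv1_add hp hv', PS_deriv]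

lemma PhiRel.iter {d m : ℕ} {M : (Fin d → ℕ) → ℂ} {δ : ℝ} (hδ : 0 < δ) {k : ℕ} (i : Fin d) (n : ℕ) :
    ∀ {σ : Fin d → ℕ} {f : Vd d → ℂ}, PhiRel d m M δ (k + n) σ f →
    PhiRel d m M δ k (σ + Pi.single i n) ((pderiv1 i)^[n] f) := by
  induction n with
  | zero => intro σ f h; simpa using h
  | succ n ih =>
    intro σ f h
    have := ih (PhiRel.pd hδ (k := k + n) h i)
    rw [add_assoc, ← Pi.single_add, add_comm 1 n] at this
    exact this

lemma PhiRel.list {d m : ℕ} {M : (Fin d → ℕ) → ℂ} {δ : ℝ} (hδ : 0 < δ) (β : Fin d → ℕ)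
    {σ : Fin d → ℕ} {f : Vd d → ℂ} (l : List (Fin d)) :
    ∀ {k : ℕ}, PhiRel d m M δ (k + (l.map β).sum) σ f →
    PhiRel d m M δ k (σ + (l.map fun i => Pi.single i (β i)).sum)
      ((l.map fun i => (pderiv1 i)^[β i]).foldr (fun op g => op g) f) := by
  induction l with
  | nil => intro k h; simpa using h
  | cons i l ih =>
    intro k h
    simp only [List.map_cons, List.sum_cons, List.foldr_cons] at h ⊢
    rw [← add_assoc] at h
    have := PhiRel.iter hδ i (β i) (ih h)
    rw [add_assoc, add_comm _ (Pi.single i (β i) : Fin d → ℕ)] at this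
    exact this

lemma PhiRel.dmulti {d m : ℕ} {M : (Fin d → ℕ) → ℂ} {δ : ℝ} (hδ : 0 < δ) (β : Fin d → ℕ)
    {f : Vd d → ℂ} {k : ℕ} (h : PhiRel d m M δ (k + ∑ i, β i) 0 f) :
    PhiRel d m M δ k β (Dmulti β f) := by
  have h1 : ((List.finRange d).map β).sum = ∑ i, β i := by
    rw [← List.ofFn_eq_map, List.sum_ofFn]
  have h2 : ((List.finRange d).map fun i => (Pi.single i (β i) : Fin d → ℕ)).sum = β := by
    rw [← List.ofFn_eq_map, List.sum_ofFn, Finset.univ_sum_single]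
  have := PhiRel.list hδ β (List.finRange d) (k := k) (by rw [h1]; exact h)
  rw [h2, zero_add] at this
  unfold Dmulti
  rw [List.ofFn_eq_map]
  exact this

lemma phi_rel (d m : ℕ) (hm : 2 ≤ m) (M : (Fin d → ℕ) → ℂ) (δ : ℝ) :
    PhiRel d m M δ (2 * m) 0 (phiFun d m M δ) := by
  obtain ⟨n, hn⟩ : ∃ n, 2 * m = n + 1 := ⟨2 * m - 1, by omega⟩
  have hw : Van (2 * m) (fun x : Vd d => Complex.exp (-(((‖x‖ ^ 2 : ℝ) : ℂ)) ^ m) - 1) := by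
    have := van_pow (d := d) m
    rw [hn] at this ⊢
    exact van_exp this
  have hP : Van 0 (Ppoly d m M) := by
    rw [← PS_zero]; exact PS_cd d m M 0
  have hexp : ContDiff ℝ ∞ (fun x : Vd d => Real.exp (-(‖x‖ ^ 2) ^ m)) :=
    (((contDiff_norm_sq ℝ).pow m).neg).exp
  have hta : Tame d m (fun x => ((‖x‖ ^ 2 * ‖x‖⁻¹) ^ (m + 2) * Real.sin (‖x‖⁻¹ ^ m)) *
      Real.exp (-(‖x‖ ^ 2) ^ m)) :=
    .mul _ _ (.mul _ _ (.pow (.mul _ _ (.smooth _ (contDiff_norm_sq ℝ)) .inv) _) .sin)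
      (.smooth _ hexp)
  refine ⟨_, _, Van.mul (by omega) hP hw, hta, ?_⟩
  funext x
  rw [PS_zero]
  by_cases h0 : x = 0
  · have : m ≠ 0 := by omega
    simp [phiFun, Gf, h0, this]
  · have hx : ‖x‖ ≠ 0 := norm_ne_zero_iff.mpr h0
    have e1 : ‖x‖ ^ 2 * ‖x‖⁻¹ = ‖x‖ := by field_simp
    have e2 : -δ / ‖x‖ ^ 2 = -δ * ‖x‖⁻¹ ^ 2 := by rw [inv_pow]; rfl
    have e3 : 1 / ‖x‖ ^ m = ‖x‖⁻¹ ^ m := by rw [inv_pow, one_div]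
    simp only [phiFun, Gf, h0, if_false]
    rw [e1, e2, e3, pow_mul]
    push_cast
    ring

/-- For `m ≥ 2`, prescribed moments `M`, `δ > 0` and every multi-index `β`
with `|β| ≤ m`, one has `(D^β φ_δ)(0) = (-i)^{|β|} M_β`. -/
theorem stmt6 (d m : ℕ) (hm : 2 ≤ m) (M : (Fin d → ℕ) → ℂ) (δ : ℝ) (hδ : 0 < δ)
    (β : Fin d → ℕ) (hβ : (∑ i, β i) ≤ m) :
    Dmulti β (phiFun d m M δ) 0 = (-Complex.I) ^ (∑ i, β i) * M β := by
  obtain ⟨n, hn⟩ : ∃ n, 2 * m = n + ∑ i, β i := ⟨2 * m - ∑ i, β i, by omega⟩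
  have h := phi_rel d m hm M δ
  rw [hn] at h
  obtain ⟨k, rfl⟩ : ∃ k, n = k + 1 := ⟨n - 1, by omega⟩
  obtain ⟨v, a, hv, _, he⟩ := PhiRel.dmulti hδ β h
  rw [he]
  simp only [hv.2.1, Gf, if_true]
  rw [PS_at d m M β hβ]
  simp

end
end
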